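/- For all positive integers n and m, D_{ℝ, n·2^m}(2^m) ≥ (2^n/(n+1))^{2^m − 1}, where D_{ℝ,M}(N) is the real Bohnenblust–Hille constant for M-homogeneous polynomials in N variables. -/

import Mathlib

open MvPolynomial Filter

/-- The sup norm of a real polynomial in `n` variables over the cube `[-1,1]^n`. -/
noncomputable def supNorm {n : ℕ} (P : MvPolynomial (Fin n) ℝ) : ℝ :=
  sSup {y : ℝ | ∃ x : Fin n → ℝ, (∀ i, |x i| ≤ 1) ∧ y = |eval x P|}

/-- The `ℓ_p` norm of the coefficients of a real polynomial. -/
noncomputable def lpNorm {n : ℕ} (p : ℝ) (P : MvPolynomial (Fin n) ℝ) : ℝ :=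
  (∑ α ∈ P.support, |coeff α P| ^ p) ^ (1 / p)

/-- The real polynomial Bohnenblust–Hille constant `D_{ℝ,m}`. -/
noncomputable def BHconst (m : ℕ) : ℝ :=
  sInf {D : ℝ | 0 < D ∧ ∀ (n : ℕ) (P : MvPolynomial (Fin n) ℝ),
    P.IsHomogeneous m → lpNorm (2 * m / (m + 1)) P ≤ D * supNorm P}

/-- The real polynomial Bohnenblust–Hille constant `D_{ℝ,m}(n)` in a fixed number `n`
of variables. -/
noncomputable def BHconstN (m n : ℕ) : ℝ :=
  sInf {D : ℝ | 0 < D ∧ ∀ P : MvPolynomial (Fin n) ℝ,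
    P.IsHomogeneous m → lpNorm (2 * m / (m + 1)) P ≤ D * supNorm P}

/-!
Let `Q₀ = x` and `Qₘ₊₁(x, y) = Qₘ(x)² - Qₘ(y)²`, the two copies of `Qₘ` having disjoint variables.
Then `Qₘ` is `2 ^ m`-homogeneous in `2 ^ m` variables and bounded by `1` on the cube, so
`‖Qₘ ^ n‖ ≤ 1`. In the binomial expansion of `Qₘ₊₁ ^ n` the terms `Qₘ(x)^(2k) Qₘ(y)^(2(n-k))` have
pairwise distinct degrees in `x` and hence do not cancel. Choosing `k = n / 2`, where
`n.choose k ≥ 2 ^ n / (n + 1)`, one finds by induction on `m` a coefficient of `Qₘ ^ n` that is at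
least `(2 ^ n / (n + 1)) ^ (2 ^ m - 1)` in absolute value. A single coefficient is at most the
`ℓ_p` norm, which gives the lower bound. The set whose infimum is the Bohnenblust–Hille constant is
nonempty (otherwise the infimum would be the junk value `0`), because on a space of polynomials
of bounded degree every coefficient is a finite linear combination of evaluations at points of the
cube.
-/

section NormBounds

variable {N : ℕ}

lemma bddAbove_abs_eval_cube (P : MvPolynomial (Fin N) ℝ) :
    BddAbove {y : ℝ | ∃ x : Fin N → ℝ, (∀ i, |x i| ≤ 1) ∧ y = |eval x P|} := by
  have cube_compact : IsCompact (Set.univ.pi fun _ : Fin N => Set.Icc (-1 : ℝ) 1) :=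
    isCompact_univ_pi fun _ => isCompact_Icc
  refine (cube_compact.image (continuous_eval P).abs).bddAbove.mono ?_
  rintro y ⟨x, hx, rfl⟩
  exact ⟨x, fun i _ => abs_le.1 (hx i), rfl⟩

lemma abs_eval_le_supNorm (P : MvPolynomial (Fin N) ℝ) {x : Fin N → ℝ} (hx : ∀ i, |x i| ≤ 1) :
    |eval x P| ≤ supNorm P :=
  le_csSup (bddAbove_abs_eval_cube P) ⟨x, hx, rfl⟩

lemma supNorm_nonneg (P : MvPolynomial (Fin N) ℝ) : 0 ≤ supNorm P :=
  (abs_nonneg _).trans (abs_eval_le_supNorm P (x := 0) (by simp))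

lemma supNorm_le {P : MvPolynomial (Fin N) ℝ} {C : ℝ}
    (h : ∀ x : Fin N → ℝ, (∀ i, |x i| ≤ 1) → |eval x P| ≤ C) :
    supNorm P ≤ C := by
  refine csSup_le ⟨_, 0, by simp, rfl⟩ ?_
  rintro y ⟨x, hx, rfl⟩
  exact h x hx

lemma sum_abs_coeff_rpow_nonneg (p : ℝ) (P : MvPolynomial (Fin N) ℝ) :
    0 ≤ ∑ α ∈ P.support, |coeff α P| ^ p :=
  Finset.sum_nonneg fun _ _ => by positivity

lemma abs_coeff_le_lpNorm {p : ℝ} (hp : 0 < p) (P : MvPolynomial (Fin N) ℝ) (α : Fin N →₀ ℕ) :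
    |coeff α P| ≤ lpNorm p P := by
  rw [lpNorm, one_div]
  by_cases hα : α ∈ P.support
  · rw [Real.le_rpow_inv_iff_of_pos (abs_nonneg _) (sum_abs_coeff_rpow_nonneg p P) hp]
    exact Finset.single_le_sum (f := fun α => |coeff α P| ^ p) (fun _ _ => by positivity) hα
  · rw [notMem_support_iff.1 hα, abs_zero]
    exact Real.rpow_nonneg (sum_abs_coeff_rpow_nonneg p P) _

end NormBounds

section Finiteness

lemma span_eval_eq_top {σ 𝕜 : Type*} [Finite σ] [Field 𝕜] (M : ℕ) {S : σ → Set 𝕜}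
    (hS : ∀ i, (S i).Infinite) :
    Submodule.span 𝕜 {φ : Module.Dual 𝕜 (restrictTotalDegree σ 𝕜 M) |
      ∃ x ∈ Set.univ.pi S, ∀ P, φ P = eval x P.1} = ⊤ := by
  refine Submodule.span_eq_top_of_ne_zero fun P hP => ?_
  contrapose! hP
  have eval_eq_zero (x : σ → 𝕜) (hx : x ∈ Set.univ.pi S) : eval x P.1 = 0 :=
    hP ((aeval x).toLinearMap ∘ₗ Submodule.subtype _) ⟨x, hx, fun _ => rfl⟩
  refine Subtype.ext (funext_set S hS fun x hx => ?_)
  rw [eval_eq_zero x hx, ZeroMemClass.coe_zero, map_zero]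

variable {N M : ℕ}

lemma exists_abs_dual_le_mul_supNorm
    (φ : Module.Dual ℝ (restrictTotalDegree (Fin N) ℝ M)) :
    ∃ K : ℝ, 0 ≤ K ∧ ∀ P, |φ P| ≤ K * supNorm P.1 := by
  have hφ := (span_eval_eq_top M fun _ : Fin N => Set.Icc_infinite (by norm_num : (-1 : ℝ) < 1)).ge
    (Submodule.mem_top (x := φ))
  induction hφ using Submodule.span_induction with
  | mem φ h =>
    obtain ⟨x, hx, eval_x⟩ := h
    refine ⟨1, zero_le_one, fun P => ?_⟩
    rw [eval_x, one_mul]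
    exact abs_eval_le_supNorm P.1 fun i => abs_le.2 (hx i trivial)
  | zero => exact ⟨0, le_rfl, fun P => by simp⟩
  | add φ ψ _ _ ihφ ihψ =>
    obtain ⟨K, hK, hφ⟩ := ihφ
    obtain ⟨L, hL, hψ⟩ := ihψ
    refine ⟨K + L, add_nonneg hK hL, fun P => ?_⟩
    rw [LinearMap.add_apply, add_mul]
    exact (abs_add_le _ _).trans (add_le_add (hφ P) (hψ P))
  | smul c φ _ ih =>
    obtain ⟨K, hK, hφ⟩ := ih
    refine ⟨|c| * K, by positivity, fun P => ?_⟩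
    rw [LinearMap.smul_apply, smul_eq_mul, abs_mul, mul_assoc]
    exact mul_le_mul_of_nonneg_left (hφ P) (abs_nonneg c)

lemma exists_abs_coeff_le_mul_supNorm (N M : ℕ) (α : Fin N →₀ ℕ) :
    ∃ K : ℝ, 0 ≤ K ∧ ∀ P : MvPolynomial (Fin N) ℝ, P.totalDegree ≤ M →
      |coeff α P| ≤ K * supNorm P := by
  obtain ⟨K, hK, h⟩ := exists_abs_dual_le_mul_supNorm
    (lcoeff ℝ α ∘ₗ (restrictTotalDegree (Fin N) ℝ M).subtype)
  exact ⟨K, hK, fun P hP => h ⟨P, (mem_restrictTotalDegree _ _ _).2 hP⟩⟩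

lemma exists_lpNorm_le_mul_supNorm (N M : ℕ) {p : ℝ} (hp : 0 < p) :
    ∃ D : ℝ, 0 < D ∧ ∀ P : MvPolynomial (Fin N) ℝ, P.totalDegree ≤ M →
      lpNorm p P ≤ D * supNorm P := by
  choose K hK0 hK using exists_abs_coeff_le_mul_supNorm N M
  let S : Finset (Fin N →₀ ℕ) := (Finsupp.finite_of_degree_le M).toFinset
  let A : ℝ := ∑ α ∈ S, K α ^ p
  have hA : 0 ≤ A := Finset.sum_nonneg fun α _ => Real.rpow_nonneg (hK0 α) _
  refine ⟨A ^ (1 / p) + 1, by positivity, fun P hP => ?_⟩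
  have zero_le_supNorm := supNorm_nonneg P
  have support_subset : P.support ⊆ S := fun α hα =>
    (Finsupp.finite_of_degree_le M).mem_toFinset.2 ((le_totalDegree hα).trans hP)
  have sum_le : ∑ α ∈ P.support, |coeff α P| ^ p ≤ A * supNorm P ^ p :=
    calc ∑ α ∈ P.support, |coeff α P| ^ p
      _ ≤ ∑ α ∈ S, |coeff α P| ^ p :=
          Finset.sum_le_sum_of_subset_of_nonneg support_subset fun _ _ _ => by positivity
      _ ≤ ∑ α ∈ S, (K α * supNorm P) ^ p := by gcongr with α; exact hK α P hP
      _ = A * supNorm P ^ p := by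
          simp only [Real.mul_rpow (hK0 _) zero_le_supNorm, A, Finset.sum_mul]
  calc lpNorm p P
    _ ≤ (A * supNorm P ^ p) ^ (1 / p) :=
        Real.rpow_le_rpow (sum_abs_coeff_rpow_nonneg p P) sum_le (by positivity)
    _ = A ^ (1 / p) * supNorm P := by
        rw [Real.mul_rpow hA (by positivity), one_div, Real.rpow_rpow_inv zero_le_supNorm hp.ne']
    _ ≤ (A ^ (1 / p) + 1) * supNorm P := by gcongr; linarith

lemma BHconstN_nonneg (M N : ℕ) : 0 ≤ BHconstN M N :=
  Real.sInf_nonneg fun _ hD => hD.1.le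

lemma lpNorm_le_BHconstN_mul_supNorm (hM : M ≠ 0) {P : MvPolynomial (Fin N) ℝ}
    (hP : P.IsHomogeneous M) :
    lpNorm (2 * M / (M + 1)) P ≤ BHconstN M N * supNorm P := by
  obtain ⟨D, hD, lpNorm_le⟩ :=
    exists_lpNorm_le_mul_supNorm N M (p := 2 * M / (M + 1)) (by positivity)
  have lpNorm_le_of_homogeneous (Q : MvPolynomial (Fin N) ℝ) (hQ : Q.IsHomogeneous M) :=
    lpNorm_le Q hQ.totalDegree_le
  rcases (supNorm_nonneg P).eq_or_lt with supNorm_eq | supNorm_pos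
  · simpa only [← supNorm_eq, mul_zero] using lpNorm_le_of_homogeneous P hP
  · rw [← div_le_iff₀ supNorm_pos]
    exact le_csInf ⟨D, hD, lpNorm_le_of_homogeneous⟩ fun E hE =>
      (div_le_iff₀ supNorm_pos).2 (hE.2 P hP)

end Finiteness

section DisjointVariables

variable {σ τ R : Type*} [CommSemiring R]

lemma coeff_sumElim_rename_mul_rename (A : MvPolynomial σ R) (B : MvPolynomial τ R)
    (a : σ →₀ ℕ) (b : τ →₀ ℕ) :
    coeff (a.sumElim b) (rename Sum.inl A * rename Sum.inr B) = coeff a A * coeff b B := by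
  classical
  induction A using MvPolynomial.induction_on' with
  | add p q hp hq => simp only [map_add, add_mul, coeff_add, hp, hq]
  | monomial u r =>
    induction B using MvPolynomial.induction_on' with
    | add p q hp hq => simp only [map_add, mul_add, coeff_add, hp, hq]
    | monomial v s =>
      have sumElim_inj : u.sumElim v = a.sumElim b ↔ v = b ∧ u = a := by
        simp only [and_comm, Finsupp.ext_iff, Sum.forall, Finsupp.sumElim_inl, Finsupp.sumElim_inr]
      simp only [rename_monomial, monomial_mul, ← Finsupp.sumElim_eq_add, coeff_monomial,
        sumElim_inj, ite_and, ite_mul, mul_ite, zero_mul, mul_zero]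

lemma coeff_sumElim_rename_add_rename_pow {d : ℕ} (hd : d ≠ 0) {A : MvPolynomial σ R}
    (hA : A.IsHomogeneous d) (B : MvPolynomial τ R) {k : ℕ} (l : ℕ) {a : σ →₀ ℕ}
    (ha : a.degree = d * k) (b : τ →₀ ℕ) :
    coeff (a.sumElim b) ((rename Sum.inl A + rename Sum.inr B) ^ (k + l)) =
      coeff a (A ^ k) * coeff b (B ^ l) * (k + l).choose k := by
  have coeff_term (j : ℕ) :
      coeff (a.sumElim b) (rename Sum.inl A ^ j * rename Sum.inr B ^ (k + l - j) *
        ((k + l).choose j : MvPolynomial (σ ⊕ τ) R)) =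
      coeff a (A ^ j) * coeff b (B ^ (k + l - j)) * (k + l).choose j := by
    rw [← nsmul_eq_mul', coeff_smul, ← map_pow, ← map_pow, coeff_sumElim_rename_mul_rename,
      nsmul_eq_mul']
  rw [add_pow, coeff_sum, Finset.sum_eq_single k]
  · rw [coeff_term, Nat.add_sub_cancel_left]
  · intro j _ hj
    have degree_ne : a.degree ≠ d * j := by
      rw [ha]
      exact fun h => hj (Nat.eq_of_mul_eq_mul_left (Nat.pos_of_ne_zero hd) h).symm
    rw [coeff_term, (hA.pow j).coeff_eq_zero degree_ne, zero_mul, zero_mul]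
  · intro hk
    exact absurd (Finset.mem_range.2 (by lia)) hk

end DisjointVariables

section BinomMean

/-- The mean of the binomial coefficients `n.choose k`, `0 ≤ k ≤ n`; its powers are the lower bounds
for the coefficients of the extremal polynomials. -/
noncomputable def binomMean (n : ℕ) : ℝ := 2 ^ n / (n + 1)

lemma binomMean_pos (n : ℕ) : 0 < binomMean n := by
  unfold binomMean
  positivity

lemma binomMean_le_choose_half (n : ℕ) : binomMean n ≤ n.choose (n / 2) := by
  rw [binomMean, div_le_iff₀ (by positivity)]
  have two_pow_le : 2 ^ n ≤ n.choose (n / 2) * (n + 1) :=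
    calc 2 ^ n
      _ = ∑ k ∈ Finset.range (n + 1), n.choose k := (Nat.sum_range_choose n).symm
      _ ≤ ∑ _k ∈ Finset.range (n + 1), n.choose (n / 2) :=
          Finset.sum_le_sum fun k _ => Nat.choose_le_middle k n
      _ = n.choose (n / 2) * (n + 1) := by
          rw [Finset.sum_const, Finset.card_range, smul_eq_mul, mul_comm]
  exact_mod_cast two_pow_le

lemma binomMean_add_sq_le (k l : ℕ) :
    binomMean (k + l) ^ 2 ≤ binomMean (2 * k) * binomMean (2 * l) := by
  have denominators_le : ((2 * k : ℝ) + 1) * (2 * l + 1) ≤ (k + l + 1) ^ 2 := by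
    nlinarith [sq_nonneg ((k : ℝ) - l)]
  simp only [binomMean, div_pow, div_mul_div_comm, ← pow_mul, ← pow_add]
  rw [show (k + l) * 2 = 2 * k + 2 * l by ring]
  push_cast
  gcongr

end BinomMean

section SquareDiff

variable {σ R : Type*} [CommRing R]

/-- The polynomial `Q(x)² - Q(y)²`, where the variables `x` and `y` are the left and right copies
of the variables of `Q`. It is the step in the recursive construction of the extremal
polynomials. -/
noncomputable def squareDiff (Q : MvPolynomial σ R) : MvPolynomial (σ ⊕ σ) R :=
  rename Sum.inl Q ^ 2 - rename Sum.inr Q ^ 2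

lemma isHomogeneous_squareDiff {Q : MvPolynomial σ R} {d : ℕ} (hQ : Q.IsHomogeneous d) :
    (squareDiff Q).IsHomogeneous (d * 2) :=
  (hQ.rename_isHomogeneous.pow 2).sub (hQ.rename_isHomogeneous.pow 2)

lemma eval_squareDiff (Q : MvPolynomial σ R) (x : σ ⊕ σ → R) :
    eval x (squareDiff Q) = eval (x ∘ Sum.inl) Q ^ 2 - eval (x ∘ Sum.inr) Q ^ 2 := by
  simp only [squareDiff, map_sub, map_pow, eval_rename]

lemma coeff_sumElim_squareDiff_pow {d : ℕ} (hd : d ≠ 0) {Q : MvPolynomial σ R}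
    (hQ : Q.IsHomogeneous d) {k : ℕ} (l : ℕ) {a : σ →₀ ℕ} (ha : a.degree = d * (2 * k))
    (b : σ →₀ ℕ) :
    coeff (a.sumElim b) (squareDiff Q ^ (k + l)) =
      (-1) ^ l * (coeff a (Q ^ (2 * k)) * coeff b (Q ^ (2 * l)) * (k + l).choose k) := by
  have squareDiff_eq :
      squareDiff Q = rename Sum.inl (Q ^ 2) + rename Sum.inr (C (-1) * Q ^ 2) := by
    simp only [squareDiff, map_mul, map_pow, map_neg, map_one]
    ring
  rw [squareDiff_eq, coeff_sumElim_rename_add_rename_pow (mul_ne_zero hd two_ne_zero) (hQ.pow 2)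
    _ l (ha.trans (mul_assoc d 2 k).symm), mul_pow, ← map_pow, coeff_C_mul, ← pow_mul, ← pow_mul]
  ring

lemma exists_pow_le_abs_coeff_squareDiff_pow {d e : ℕ} (hd : d ≠ 0) {Q : MvPolynomial σ ℝ}
    (hQ : Q.IsHomogeneous d) (h : ∀ n, ∃ a, binomMean n ^ e ≤ |coeff a (Q ^ n)|) (n : ℕ) :
    ∃ c, binomMean n ^ (2 * e + 1) ≤ |coeff c (squareDiff Q ^ n)| := by
  obtain ⟨k, l, hk, rfl⟩ : ∃ k l, k = n / 2 ∧ n = k + l := ⟨n / 2, n - n / 2, rfl, by lia⟩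
  obtain ⟨a, ha⟩ := h (2 * k)
  obtain ⟨b, hb⟩ := h (2 * l)
  have coeff_ne_zero : coeff a (Q ^ (2 * k)) ≠ 0 :=
    abs_pos.1 ((pow_pos (binomMean_pos _) e).trans_le ha)
  have degree_a : a.degree = d * (2 * k) := by
    by_contra degree_ne
    exact coeff_ne_zero ((hQ.pow _).coeff_eq_zero degree_ne)
  have le_choose : binomMean (k + l) ≤ (k + l).choose k :=
    (binomMean_le_choose_half _).trans_eq (by rw [← hk])
  refine ⟨a.sumElim b, ?_⟩
  have nonneg_k := (binomMean_pos (2 * k)).le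
  have nonneg_l := (binomMean_pos (2 * l)).le
  calc binomMean (k + l) ^ (2 * e + 1)
    _ = (binomMean (k + l) ^ 2) ^ e * binomMean (k + l) := by rw [pow_succ, pow_mul]
    _ ≤ (binomMean (2 * k) * binomMean (2 * l)) ^ e * (k + l).choose k := by
        have sq_pow_le := pow_le_pow_left₀ (sq_nonneg _) (binomMean_add_sq_le k l) e
        exact mul_le_mul sq_pow_le le_choose (binomMean_pos _).le (by positivity)
    _ ≤ |coeff a (Q ^ (2 * k))| * |coeff b (Q ^ (2 * l))| * (k + l).choose k := by
        rw [mul_pow]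
        gcongr
    _ = |coeff (a.sumElim b) (squareDiff Q ^ (k + l))| := by
        rw [coeff_sumElim_squareDiff_pow hd hQ l degree_a]
        simp only [abs_mul, abs_neg_one_pow, one_mul, Nat.abs_cast]

end SquareDiff

section ExtremalPolynomial

/-- The two halves of `2 ^ (m + 1)` variables, for the recursion defining `bhPolynomial`. -/
def finTwoPowSumEquiv (m : ℕ) : Fin (2 ^ m) ⊕ Fin (2 ^ m) ≃ Fin (2 ^ (m + 1)) :=
  finSumFinEquiv.trans (finCongr (Nat.two_pow_succ m).symm)

/-- The iterated difference of squares `Q₀ = x`, `Qₘ₊₁(x, y) = Qₘ(x)² - Qₘ(y)²`, in variables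
indexed by `Fin (2 ^ m)`. Its powers witness the lower bound for the Bohnenblust–Hille constants. -/
noncomputable def bhPolynomial : (m : ℕ) → MvPolynomial (Fin (2 ^ m)) ℝ
  | 0 => X 0
  | m + 1 => rename (finTwoPowSumEquiv m) (squareDiff (bhPolynomial m))

lemma isHomogeneous_bhPolynomial (m : ℕ) : (bhPolynomial m).IsHomogeneous (2 ^ m) := by
  induction m with
  | zero => exact isHomogeneous_X _ _
  | succ m ih => exact (isHomogeneous_squareDiff ih).rename_isHomogeneous

lemma abs_eval_bhPolynomial_le_one {m : ℕ} {x : Fin (2 ^ m) → ℝ} (hx : ∀ i, |x i| ≤ 1) :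
    |eval x (bhPolynomial m)| ≤ 1 := by
  induction m with
  | zero => simpa only [bhPolynomial, eval_X] using hx 0
  | succ m ih =>
    rw [bhPolynomial, eval_rename, eval_squareDiff]
    exact abs_sub_le_of_nonneg_of_le
      (sq_nonneg _) ((sq_le_one_iff_abs_le_one _).2 (ih fun _ => hx _))
      (sq_nonneg _) ((sq_le_one_iff_abs_le_one _).2 (ih fun _ => hx _))

lemma supNorm_bhPolynomial_pow_le_one (m n : ℕ) : supNorm (bhPolynomial m ^ n) ≤ 1 := by
  refine supNorm_le fun x hx => ?_
  rw [map_pow, abs_pow]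
  exact pow_le_one₀ (abs_nonneg _) (abs_eval_bhPolynomial_le_one hx)

lemma exists_pow_le_abs_coeff_bhPolynomial_pow (m n : ℕ) :
    ∃ α, binomMean n ^ (2 ^ m - 1) ≤ |coeff α (bhPolynomial m ^ n)| := by
  induction m generalizing n with
  | zero =>
    refine ⟨Finsupp.single 0 n, ?_⟩
    simp [bhPolynomial, X_pow_eq_monomial]
  | succ m ih =>
    obtain ⟨c, hc⟩ := exists_pow_le_abs_coeff_squareDiff_pow (by positivity)
      (isHomogeneous_bhPolynomial m) ih n
    refine ⟨c.mapDomain (finTwoPowSumEquiv m), ?_⟩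
    rw [bhPolynomial, ← map_pow, coeff_rename_mapDomain _ (finTwoPowSumEquiv m).injective]
    have exponent_eq : 2 ^ (m + 1) - 1 = 2 * (2 ^ m - 1) + 1 := by
      have := Nat.one_le_two_pow (n := m)
      lia
    rwa [exponent_eq]

end ExtremalPolynomial

/-- For all positive integers `n` and `m`,
`D_{ℝ, n·2^m}(2^m) ≥ (2^n/(n+1))^{2^m - 1}`. -/
theorem real_BH_lower_fixed_dim (n m : ℕ) (hn : 0 < n) (hm : 0 < m) :
    ((2 : ℝ) ^ n / (n + 1)) ^ (2 ^ m - 1) ≤ BHconstN (n * 2 ^ m) (2 ^ m) := by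
  obtain ⟨α, le_coeff⟩ := exists_pow_le_abs_coeff_bhPolynomial_pow m n
  have homogeneous : (bhPolynomial m ^ n).IsHomogeneous (n * 2 ^ m) :=
    mul_comm (2 ^ m) n ▸ (isHomogeneous_bhPolynomial m).pow n
  have degree_ne_zero : n * 2 ^ m ≠ 0 := by positivity
  calc ((2 : ℝ) ^ n / (n + 1)) ^ (2 ^ m - 1)
    _ ≤ |coeff α (bhPolynomial m ^ n)| := le_coeff
    _ ≤ lpNorm (2 * (n * 2 ^ m : ℕ) / ((n * 2 ^ m : ℕ) + 1)) (bhPolynomial m ^ n) :=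
        abs_coeff_le_lpNorm (by positivity) _ α
    _ ≤ BHconstN (n * 2 ^ m) (2 ^ m) * supNorm (bhPolynomial m ^ n) :=
        lpNorm_le_BHconstN_mul_supNorm degree_ne_zero homogeneous
    _ ≤ BHconstN (n * 2 ^ m) (2 ^ m) :=
        mul_le_of_le_one_right (BHconstN_nonneg _ _) (supNorm_bhPolynomial_pow_le_one m n)
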